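/- arXiv:1402.6973 — 7 statements merged into one kernel-verified Lean document; each statement's English description precedes it below -/
import Mathlib

section
/- In any execution of algorithm ProactiveGreedy on a d-uniform arrival sequence with k ≤ d packets per frame, no packet ever expires: every arriving packet is either delivered by its deadline or is proactively dropped by the algorithm (in the drop steps) strictly before its deadline forces expiry. -/
/-! ## Model: d-uniform bounded-delay goodput ({\sc d-uBDG}) instances -/

/-- An arrival sequence for the `d`-uniform bounded-delay goodput problem:
`n` frames, each consisting of `k` unit-size packets; packet `(f, ℓ)` (the `ℓ`-th
packet of frame `f`, `0`-indexed) arrives at time `a f ℓ`, arrival times are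
nondecreasing within each frame, and every packet has deadline `a f ℓ + d`. -/
structure ArrivalSeq (n k d : ℕ) where
  a : Fin n → Fin k → ℕ
  mono : ∀ f : Fin n, Monotone (a f)

namespace ArrivalSeq

variable {n k d : ℕ}

/-- At most `b` packets arrive in any single time slot (maximum burst size `b`). -/
def BurstBound (A : ArrivalSeq n k d) (b : ℕ) : Prop :=
  ∀ t : ℕ, Set.ncard {p : Fin n × Fin k | A.a p.1 p.2 = t} ≤ b

/-- A feasible schedule: at most one packet is delivered per time slot, every packet is
delivered at most once, and every delivered packet is delivered between its arrival
time and its deadline. -/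
def IsSchedule (A : ArrivalSeq n k d) (S : ℕ → Option (Fin n × Fin k)) : Prop :=
  (∀ (p : Fin n × Fin k) (t t' : ℕ), S t = some p → S t' = some p → t = t') ∧
  ∀ (p : Fin n × Fin k) (t : ℕ), S t = some p →
    A.a p.1 p.2 ≤ t ∧ t ≤ A.a p.1 p.2 + d

/-- A frame is successful under schedule `S` if all of its packets are delivered. -/
def Successful (A : ArrivalSeq n k d) (S : ℕ → Option (Fin n × Fin k)) (f : Fin n) : Prop :=
  ∀ ℓ : Fin k, ∃ t : ℕ, S t = some (f, ℓ)

/-- The goodput of a schedule: the number of successful frames. -/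
noncomputable def Goodput (A : ArrivalSeq n k d) (S : ℕ → Option (Fin n × Fin k)) : ℕ :=
  Set.ncard {f : Fin n | A.Successful S f}

/-- `S` is an optimal (feasible) schedule for `A`. -/
def IsOptimal (A : ArrivalSeq n k d) (S : ℕ → Option (Fin n × Fin k)) : Prop :=
  A.IsSchedule S ∧
    ∀ S' : ℕ → Option (Fin n × Fin k), A.IsSchedule S' → A.Goodput S' ≤ A.Goodput S

end ArrivalSeq

/-! ## Executions of scheduling algorithms -/

/-- A trace of the execution of a scheduling algorithm on the arrival sequence `A`:
`deliver t` is the packet delivered at the scheduling substep of slot `t` (if any), and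
`dropTime p` is the slot at which packet `p` is dropped by the algorithm (if ever). -/
structure AlgExec {n k d : ℕ} (A : ArrivalSeq n k d) where
  deliver : ℕ → Option (Fin n × Fin k)
  dropTime : Fin n × Fin k → Option ℕ

namespace AlgExec

variable {n k d : ℕ} {A : ArrivalSeq n k d}

/-- packet `p` is delivered at some time `≤ t`. -/
def DeliveredBy (E : AlgExec A) (p : Fin n × Fin k) (t : ℕ) : Prop :=
  ∃ s ≤ t, E.deliver s = some p

/-- packet `p` is delivered at some point of the execution. -/
def Delivered (E : AlgExec A) (p : Fin n × Fin k) : Prop :=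
  ∃ s : ℕ, E.deliver s = some p

/-- packet `p` is dropped at some time `< t`. -/
def DroppedBefore (E : AlgExec A) (p : Fin n × Fin k) (t : ℕ) : Prop :=
  ∃ s < t, E.dropTime p = some s

/-- packet `p` is pending at (the scheduling substep of) slot `t`: it has arrived, its
deadline has not passed, and it has been neither delivered nor dropped before `t`. -/
def Pending (E : AlgExec A) (p : Fin n × Fin k) (t : ℕ) : Prop :=
  A.a p.1 p.2 ≤ t ∧ t ≤ A.a p.1 p.2 + d ∧
    ¬ (∃ s < t, E.deliver s = some p) ∧ ¬ E.DroppedBefore p t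

/-- frame `f` is alive at time `t`: none of its packets has been dropped before `t`,
nor has expired (i.e., reached its deadline undelivered) before `t`. -/
def Alive (E : AlgExec A) (f : Fin n) (t : ℕ) : Prop :=
  ∀ ℓ : Fin k, ¬ E.DroppedBefore (f, ℓ) t ∧
    (A.a f ℓ + d < t → E.DeliveredBy (f, ℓ) (A.a f ℓ + d))

/-- frame `f` has some pending packet at time `t`. -/
def HasPending (E : AlgExec A) (f : Fin n) (t : ℕ) : Prop :=
  ∃ ℓ : Fin k, E.Pending (f, ℓ) t

/-- `I_t(f)`: the index of the first (minimal-index) pending packet of `f` at time `t`. -/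
noncomputable def Iidx (E : AlgExec A) (t : ℕ) (f : Fin n) : ℕ :=
  sInf {ℓ : ℕ | ∃ h : ℓ < k, E.Pending (f, ⟨ℓ, h⟩) t}

/-- frame `f` is completed by the execution: all of its packets are delivered. -/
def Completed (E : AlgExec A) (f : Fin n) : Prop :=
  ∀ ℓ : Fin k, E.Delivered (f, ℓ)

/-- `w f`: the number of packets of frame `f` delivered by the execution. -/
noncomputable def w (E : AlgExec A) (f : Fin n) : ℕ :=
  Set.ncard {ℓ : Fin k | E.Delivered (f, ℓ)}

/-- the first time at which some packet of `f` is dropped. -/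
noncomputable def dropT (E : AlgExec A) (f : Fin n) : ℕ :=
  sInf {t : ℕ | ∃ ℓ : Fin k, E.dropTime (f, ℓ) = some t}

/-- the index of the first packet of `f` to be dropped (the minimal index among the
packets of `f` dropped at the first drop time of `f`). -/
noncomputable def firstDropIdx (E : AlgExec A) (f : Fin n) : ℕ :=
  sInf {ℓ : ℕ | ∃ h : ℓ < k, E.dropTime (f, ⟨ℓ, h⟩) = some (E.dropT f)}

/-! ### The algorithm `ProactiveGreedy` -/

/-- The defining conditions of an execution of `ProactiveGreedy` (with arbitrary
tie-breaking): at every slot `t`,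
(i) a delivered packet is the first pending packet of an alive frame maximizing
`I_t` among all alive frames with pending packets;
(ii) a packet is delivered whenever some alive frame has a pending packet; and
(iii) a packet is dropped at `t` exactly when it is pending at `t` and either its
frame is not alive at `t` (line 1 of the algorithm) or the packet delivered at `t`
belongs to a different frame (line 4: packets of all non-chosen frames are dropped). -/
def PGValid (E : AlgExec A) : Prop :=
  (∀ (t : ℕ) (f : Fin n) (ℓ : Fin k), E.deliver t = some (f, ℓ) →
      E.Alive f t ∧ E.Pending (f, ℓ) t ∧ (ℓ : ℕ) = E.Iidx t f ∧
      ∀ f' : Fin n, E.Alive f' t → E.HasPending f' t → E.Iidx t f' ≤ E.Iidx t f) ∧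
  (∀ t : ℕ, (∃ f : Fin n, E.Alive f t ∧ E.HasPending f t) → E.deliver t ≠ none) ∧
  (∀ (p : Fin n × Fin k) (t : ℕ), E.dropTime p = some t ↔
      E.Pending p t ∧
        (¬ E.Alive p.1 t ∨ ∃ q : Fin n × Fin k, E.deliver t = some q ∧ q.1 ≠ p.1))

/-! ### The mapping `φ` used in the analysis of `ProactiveGreedy` -/

open Classical in
/-- The frame onto which a frame `f ∉ F_PG` is *directly* mapped by the mapping `φ`:
the frame whose packet is delivered at the time `t_f` at which the first packet of `f`
is dropped.  Frames of `F_PG` are mapped to themselves. -/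
noncomputable def phiNext (E : AlgExec A) (f : Fin n) : Fin n :=
  if E.Completed f then f
  else
    match E.deliver (E.dropT f) with
    | some q => q.1
    | none => f

/-- the frame onto which `f` is mapped after `j` successive (re-)mappings of `φ`. -/
noncomputable def phiChain (E : AlgExec A) (f : Fin n) (j : ℕ) : Fin n :=
  (E.phiNext)^[j] f

/-- frame `f` is *directly* mapped by `φ` via the packet `q` (of the frame `q.1`):
`q` is the packet delivered at the time the first packet of `f` is dropped. -/
def PhiDirectVia (E : AlgExec A) (f : Fin n) (q : Fin n × Fin k) : Prop :=
  ¬ E.Completed f ∧ E.deliver (E.dropT f) = some q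

/-- frame `f` is mapped (directly or indirectly, i.e. after re-mappings) by `φ`
via the packet `q`; `M(q)` is the set of frames mapped via `q`. -/
def PhiMappedVia (E : AlgExec A) (f : Fin n) (q : Fin n × Fin k) : Prop :=
  ∃ j : ℕ, E.PhiDirectVia (E.phiChain f j) q

/-! ### The algorithm `Greedy` -/

/-- packet `p` is still pending after the scheduling substep of slot `t`. -/
def PendingAfter (E : AlgExec A) (p : Fin n × Fin k) (t : ℕ) : Prop :=
  E.Pending p t ∧ E.deliver t ≠ some p

/-- frame `f` is infeasible after the scheduling substep of slot `t`: for some pending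
packet `(f, ℓ)` the pending packets of `f` of index `≤ ℓ` cannot all be scheduled in
the slots `t+1, …, a f ℓ + d`. -/
noncomputable def Infeasible (E : AlgExec A) (f : Fin n) (t : ℕ) : Prop :=
  ∃ ℓ : Fin k, E.PendingAfter (f, ℓ) t ∧
    A.a f ℓ + d < t + Set.ncard {j : Fin k | j ≤ ℓ ∧ E.PendingAfter (f, j) t}

/-- The defining conditions of an execution of `Greedy` (with arbitrary tie-breaking):
at every slot `t`,
(i) a delivered packet is the first pending packet of an alive frame maximizing `I_t`
among all alive frames with pending packets;
(ii) a packet is delivered whenever some alive frame has a pending packet; and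
(iii) a packet is dropped at `t` exactly when it is pending at `t`, it is not the
packet delivered at `t`, and either its frame is not alive at `t`, or its residual
slack at `t` is `0` (it expires), or its frame becomes infeasible at `t` (cleanup). -/
noncomputable def GreedyValid (E : AlgExec A) : Prop :=
  (∀ (t : ℕ) (f : Fin n) (ℓ : Fin k), E.deliver t = some (f, ℓ) →
      E.Alive f t ∧ E.Pending (f, ℓ) t ∧ (ℓ : ℕ) = E.Iidx t f ∧
      ∀ f' : Fin n, E.Alive f' t → E.HasPending f' t → E.Iidx t f' ≤ E.Iidx t f) ∧
  (∀ t : ℕ, (∃ f : Fin n, E.Alive f t ∧ E.HasPending f t) → E.deliver t ≠ none) ∧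
  (∀ (p : Fin n × Fin k) (t : ℕ), E.dropTime p = some t ↔
      E.Pending p t ∧ E.deliver t ≠ some p ∧
        (¬ E.Alive p.1 t ∨ A.a p.1 p.2 + d = t ∨ E.Infeasible p.1 t))

/-- packet `p = (f, ℓ)` is *eligible* at time `t`: it is in the buffer (pending) at
`t`, its frame is alive at `t`, and `ℓ = I_t(f)`. -/
def Eligible (E : AlgExec A) (p : Fin n × Fin k) (t : ℕ) : Prop :=
  E.Alive p.1 t ∧ E.Pending p t ∧ (p.2 : ℕ) = E.Iidx t p.1

/-! ### The mapping `ψ` used in the analysis of `Greedy` -/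

/-- The mapping `ψ` used in the analysis of `Greedy`, relative to the set `O` of frames
of a fixed optimal schedule and the maximum burst size `b`.  Every frame of
`F_G` (completed by `Greedy`) is mapped to itself (encoded as `dm f = none`); every
frame `f ∉ F_G` is directly mapped via a packet `q` delivered by `Greedy` no later than
the drop time `t_f` of `f`, whose index is at least the index of the first dropped
packet of `f`; every delivered packet has at most `2` frames of `O` and at most `b`
frames in total directly mapped to it. -/
structure PsiMapping (E : AlgExec A) (O : Set (Fin n)) (b : ℕ) where
  dm : Fin n → Option (Fin n × Fin k)
  mapsSelf : ∀ f : Fin n, E.Completed f → dm f = none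
  mapsAll : ∀ f : Fin n, ¬ E.Completed f → ∃ q : Fin n × Fin k, dm f = some q
  viaValid : ∀ (f : Fin n) (q : Fin n × Fin k), dm f = some q →
    E.firstDropIdx f ≤ (q.2 : ℕ) ∧ ∃ t ≤ E.dropT f, E.deliver t = some q
  capO : ∀ q : Fin n × Fin k, Set.ncard {f : Fin n | f ∈ O ∧ dm f = some q} ≤ 2
  capAll : ∀ q : Fin n × Fin k, Set.ncard {f : Fin n | dm f = some q} ≤ b

namespace PsiMapping

variable {E : AlgExec A} {O : Set (Fin n)} {b : ℕ}

/-- the frame onto which `f` is directly mapped by `ψ` (itself, if `f ∈ F_G`). -/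
def next (M : PsiMapping E O b) (f : Fin n) : Fin n :=
  match M.dm f with
  | some q => q.1
  | none => f

/-- the frame onto which `f` is mapped after `j` successive (re-)mappings of `ψ`. -/
def chain (M : PsiMapping E O b) (f : Fin n) (j : ℕ) : Fin n :=
  (M.next)^[j] f

/-- frame `f` is mapped (directly or indirectly) by `ψ` via the packet `q`;
`M(q)` is the set of frames mapped via `q`. -/
def MappedVia (M : PsiMapping E O b) (f : Fin n) (q : Fin n × Fin k) : Prop :=
  ∃ j : ℕ, M.dm (M.chain f j) = some q

end PsiMapping

end AlgExec

/-- In any execution of `ProactiveGreedy` on a `d`-uniform arrival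
sequence with `k ≤ d` packets per frame, no packet ever expires: every arriving packet
is either delivered by its deadline, or is proactively dropped by the algorithm no
later than its deadline (hence strictly before its deadline forces expiry). -/
theorem pg_no_packet_expires (n k d : ℕ) (hkd : k ≤ d)
    (A : ArrivalSeq n k d) (E : AlgExec A) (hE : E.PGValid) :
    ∀ p : Fin n × Fin k,
      (∃ t ≤ A.a p.1 p.2 + d, E.deliver t = some p) ∨
      (∃ t ≤ A.a p.1 p.2 + d, E.dropTime p = some t) := by
  rintro ⟨f, l⟩
  by_contra hcon
  push Not at hcon
  obtain ⟨hdel, hdrop⟩ := hcon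
  obtain ⟨h1, h2, h3⟩ := hE
  -- the packet is pending throughout its window
  have hpend : ∀ t, A.a f l ≤ t → t ≤ A.a f l + d → E.Pending (f, l) t := by
    intro t ht ht'
    refine ⟨ht, ht', ?_, ?_⟩
    · rintro ⟨s, hs, hs'⟩
      exact hdel s (le_trans hs.le ht') hs'
    · rintro ⟨s, hs, hs'⟩
      exact hdrop s (le_trans hs.le ht') hs'
  -- hence its own frame is served in every slot of the window
  have hserve : ∀ i : Fin (d + 1), ∃ j : Fin k, E.deliver (A.a f l + i) = some (f, j) := by
    intro i
    have hi : A.a f l + (i : ℕ) ≤ A.a f l + d := by omega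
    have hp := hpend (A.a f l + i) (by omega) hi
    have hnd := hdrop (A.a f l + i) hi
    rw [Ne, h3] at hnd
    have hal : E.Alive f (A.a f l + i) := by
      by_contra hna
      exact hnd ⟨hp, Or.inl hna⟩
    have hne := h2 (A.a f l + i) ⟨f, hal, l, hp⟩
    obtain ⟨⟨g, j⟩, hq⟩ := Option.ne_none_iff_exists'.mp hne
    have hg : g = f := by
      by_contra hgf
      exact hnd ⟨hp, Or.inr ⟨(g, j), hq, hgf⟩⟩
    subst hg
    exact ⟨j, hq⟩
  choose φ hφ using hserve
  have hlt : ∀ i i' : Fin (d + 1), i < i' → φ i ≠ φ i' := by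
    intro i i' hii heq
    have hp := (h1 _ _ _ (hφ i')).2.1
    refine hp.2.2.1 ⟨A.a f l + i, ?_, ?_⟩
    · have : (i : ℕ) < i' := hii
      omega
    · rw [hφ i, heq]
  have hinj : Function.Injective φ := by
    intro i i' heq
    rcases lt_trichotomy i i' with h | h | h
    · exact absurd heq (hlt _ _ h)
    · exact h
    · exact absurd heq.symm (hlt _ _ h)
  have hcard := Fintype.card_le_of_injective φ hinj
  simp only [Fintype.card_fin] at hcard
  omega
end

section
/- In any execution of algorithm ProactiveGreedy on a d-uniform arrival sequence with k ≤ d packets per frame, every frame of the arrival sequence is either successfully delivered (all k of its packets delivered by their deadlines) or has at least one of its packets proactively dropped by the algorithm. -/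
/-- In any execution of `ProactiveGreedy` on a `d`-uniform arrival
sequence with `k ≤ d` packets per frame, every frame of the arrival sequence is either
successfully delivered (all `k` of its packets delivered by their deadlines) or has at
least one of its packets proactively dropped by the algorithm. -/
theorem pg_delivered_or_dropped (n k d : ℕ) (hkd : k ≤ d)
    (A : ArrivalSeq n k d) (E : AlgExec A) (hE : E.PGValid) :
    ∀ f : Fin n,
      (∀ ℓ : Fin k, ∃ t ≤ A.a f ℓ + d, E.deliver t = some (f, ℓ)) ∨
      (∃ (ℓ : Fin k) (t : ℕ), E.dropTime (f, ℓ) = some t) := by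
  obtain ⟨h1, h2, h3⟩ := hE
  intro f
  by_cases hd : ∃ (ℓ : Fin k) (t : ℕ), E.dropTime (f, ℓ) = some t
  · exact Or.inr hd
  left
  -- the packet of index `m` is delivered no later than `m` slots after its arrival
  have key : ∀ m : ℕ, ∀ hm : m < k,
      ∃ t ≤ A.a f ⟨m, hm⟩ + m, E.deliver t = some (f, ⟨m, hm⟩) := by
    intro m
    induction m using Nat.strong_induction_on with
    | _ m ih =>
      intro hm
      by_contra hcon
      have hp : E.Pending (f, ⟨m, hm⟩) (A.a f ⟨m, hm⟩ + m) := by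
        refine ⟨Nat.le_add_right _ _, ?_, ?_, ?_⟩
        · change A.a f ⟨m, hm⟩ + m ≤ A.a f ⟨m, hm⟩ + d
          omega
        · rintro ⟨s, hs, hs'⟩
          exact hcon ⟨s, hs.le, hs'⟩
        · rintro ⟨s, _, hs'⟩
          exact hd ⟨_, s, hs'⟩
      have hal : E.Alive f (A.a f ⟨m, hm⟩ + m) := by
        by_contra hna
        exact hd ⟨_, _, (h3 (f, ⟨m, hm⟩) _).2 ⟨hp, Or.inl hna⟩⟩
      obtain ⟨⟨g, j⟩, hq⟩ := Option.ne_none_iff_exists'.1 (h2 _ ⟨f, hal, _, hp⟩)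
      have hg : g = f := by
        by_contra hne
        exact hd ⟨_, _, (h3 (f, ⟨m, hm⟩) _).2 ⟨hp, Or.inr ⟨_, hq, hne⟩⟩⟩
      subst hg
      obtain ⟨_, hpj, hidx, _⟩ := h1 _ _ _ hq
      have hjm : (j : ℕ) ≤ m := by
        rw [hidx]
        exact Nat.sInf_le ⟨hm, hp⟩
      rcases hjm.lt_or_eq with hlt | heq
      · obtain ⟨s, hs, hs'⟩ := ih j hlt j.2
        have hmono : A.a g j ≤ A.a g ⟨m, hm⟩ := A.mono g (by exact hjm)
        exact hpj.2.2.1 ⟨s, by simp only [Fin.eta] at hs; omega, hs'⟩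
      · have hj : j = ⟨m, hm⟩ := Fin.ext heq
        subst hj
        exact hcon ⟨_, le_rfl, hq⟩
  intro ℓ
  obtain ⟨t, ht, ht'⟩ := key ℓ ℓ.2
  have := ℓ.2
  exact ⟨t, by simp only [Fin.eta] at ht; omega, ht'⟩
end

section
/- In any execution of algorithm ProactiveGreedy, if a frame f is not completed by ProactiveGreedy (f ∉ F_PG), then there exists a time t = t_f such that f is alive at t, the packet of f with index I_t(f) is dropped by ProactiveGreedy at time t, and ProactiveGreedy delivers at time t a packet p' belonging to some frame f'. -/
/-- In any execution of `ProactiveGreedy`, if a frame `f` is not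
completed by `ProactiveGreedy` (`f ∉ F_PG`), then there exists a time `t = t_f` such
that `f` is alive at `t`, the packet of `f` with index `I_t(f)` is dropped by
`ProactiveGreedy` at time `t`, and `ProactiveGreedy` delivers at time `t` a packet `q`
belonging to some frame. -/
theorem pg_mapping_target_exists (n k d : ℕ) (hkd : k ≤ d)
    (A : ArrivalSeq n k d) (E : AlgExec A) (hE : E.PGValid) :
    ∀ f : Fin n, ¬ E.Completed f →
      ∃ (t : ℕ) (h : E.Iidx t f < k),
        E.Alive f t ∧ E.dropTime (f, ⟨E.Iidx t f, h⟩) = some t ∧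
        ∃ q : Fin n × Fin k, E.deliver t = some q := by
  intro f hf
  obtain ⟨h1, h2, h3⟩ := hE
  by_contra hno
  -- whenever `f` is alive with pending packets, a packet of `f` is delivered
  have key : ∀ t, E.Alive f t → E.HasPending f t → ∃ l : Fin k, E.deliver t = some (f, l) := by
    intro t ha hp
    obtain ⟨q, hq⟩ := Option.ne_none_iff_exists'.mp (h2 t ⟨f, ha, hp⟩)
    by_cases hqf : q.1 = f
    · exact ⟨q.2, by rw [hq, ← hqf]⟩
    · exfalso
      obtain ⟨l, hl⟩ := hp
      have hmem : E.Iidx t f ∈ {l : ℕ | ∃ h : l < k, E.Pending (f, ⟨l, h⟩) t} :=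
        Nat.sInf_mem ⟨l.1, l.2, hl⟩
      obtain ⟨hk, hpend⟩ := hmem
      exact hno ⟨t, hk, ha, (h3 _ t).2 ⟨hpend, Or.inr ⟨q, hq, hqf⟩⟩, q, hq⟩
  have mono : ∀ s t, s ≤ t → E.Alive f t → E.Alive f s := by
    intro s t hst ha l
    refine ⟨fun ⟨r, hr, hd⟩ => (ha l).1 ⟨r, by omega, hd⟩, fun h => (ha l).2 (by omega)⟩
  have alive : ∀ t, E.Alive f t := by
    intro t
    induction t with
    | zero =>
      intro l
      exact ⟨fun ⟨r, hr, _⟩ => by omega, fun h => by omega⟩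
    | succ t ih =>
      intro l
      have hnd : ¬ E.DroppedBefore (f, l) (t + 1) := by
        rintro ⟨r, hr, hd⟩
        by_cases hrt : r < t
        · exact (ih l).1 ⟨r, hrt, hd⟩
        · obtain rfl : r = t := by omega
          obtain ⟨hp, hna | ⟨q, hq, hqf⟩⟩ := (h3 _ _).1 hd
          · exact hna ih
          · obtain ⟨l', hl'⟩ := key _ ih ⟨l, hp⟩
            rw [hl'] at hq
            cases hq
            exact hqf rfl
      refine ⟨hnd, fun hlt => ?_⟩
      by_cases hlt' : A.a f l + d < t
      · exact (ih l).2 hlt'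
      · by_contra hdel
        have hdel' : ∀ i : Fin (d + 1), ∃ l' : Fin k,
            E.deliver (A.a f l + i) = some (f, l') := by
          intro i
          have hi := i.2
          apply key _ (mono _ t (by omega) ih)
          refine ⟨l, by simp, by simp only; omega, ?_, ?_⟩
          · rintro ⟨s, hs, hds⟩
            exact hdel ⟨s, by omega, hds⟩
          · rintro ⟨s, hs, hds⟩
            exact hnd ⟨s, by omega, hds⟩
        choose g hg using hdel'
        have hlt2 : ∀ i j : Fin (d + 1), i < j → g i ≠ g j := by
          intro i j hij he
          have hj := hg j
          have hpj := (h1 _ _ _ hj).2.1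
          refine hpj.2.2.1 ⟨A.a f l + i, by simpa using hij, ?_⟩
          rw [hg i, he]
        have hinj : Function.Injective g := by
          intro i j he
          rcases lt_trichotomy i j with h | h | h
          · exact absurd he (hlt2 i j h)
          · exact h
          · exact absurd he.symm (hlt2 j i h)
        have := Fintype.card_le_of_injective g hinj
        simp at this
        omega
  apply hf
  intro l
  obtain ⟨s, _, hs⟩ := (alive (A.a f l + d + 1) l).2 (by omega)
  exact ⟨s, hs⟩
end

section
/- In any execution of algorithm ProactiveGreedy, if a frame f ∉ F_PG is directly mapped by the mapping φ to a frame f', then w(f') > w(f), where w(g) denotes the number of packets of frame g delivered by ProactiveGreedy. -/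
namespace AlgExec

/-- If no packet of `f` is dropped before `T`, then every packet of `f` expiring before `T`
is delivered by its deadline. -/
lemma pg_delivered_of_no_drop {n k d : ℕ} (hkd : k ≤ d) {A : ArrivalSeq n k d}
    (E : AlgExec A) (hE : E.PGValid) (f : Fin n) (T : ℕ)
    (hnd : ∀ ℓ : Fin k, ¬ E.DroppedBefore (f, ℓ) T) :
    ∀ (m : ℕ) (ℓ : Fin k), (ℓ : ℕ) = m → A.a f ℓ + d < T →
      E.DeliveredBy (f, ℓ) (A.a f ℓ + d) := by
  obtain ⟨h1, h2, h3⟩ := hE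
  intro m
  induction m using Nat.strong_induction_on with
  | _ m ih =>
    intro ℓ hm hT
    by_contra hdel
    have key : ∀ i : Fin (d + 1), ∃ j : Fin k, E.deliver (A.a f ℓ + i) = some (f, j) := by
      intro i
      have hi : (i : ℕ) ≤ d := Nat.lt_succ_iff.mp i.2
      have hpend : E.Pending (f, ℓ) (A.a f ℓ + i) := by
        refine ⟨Nat.le_add_right _ _, by simpa using hi, ?_, ?_⟩
        · rintro ⟨s, hs, hs'⟩
          exact hdel ⟨s, by omega, hs'⟩
        · rintro ⟨s, hs, hs'⟩
          exact hnd ℓ ⟨s, by omega, hs'⟩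
      have halive : E.Alive f (A.a f ℓ + i) := by
        intro j
        refine ⟨?_, ?_⟩
        · rintro ⟨s, hs, hs'⟩
          exact hnd j ⟨s, by omega, hs'⟩
        · intro hj
          have hlt : j < ℓ := by
            by_contra hle
            have := A.mono f (not_lt.mp hle)
            omega
          exact ih j (by have : (j : ℕ) < ℓ := hlt
                         omega) j rfl (by omega)
      have hne := h2 _ ⟨f, halive, ℓ, hpend⟩
      obtain ⟨q, hq⟩ := Option.ne_none_iff_exists'.mp hne
      by_cases hqf : q.1 = f
      · exact ⟨q.2, by rw [hq, ← hqf]⟩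
      · exfalso
        exact hnd ℓ ⟨A.a f ℓ + i, by omega, (h3 _ _).mpr ⟨hpend, Or.inr ⟨q, hq, hqf⟩⟩⟩
    choose g hg using key
    have hlt : ∀ i i' : Fin (d + 1), i < i' → g i ≠ g i' := by
      intro i i' hii heq
      have h := (h1 _ _ _ (hg i')).2.1.2.2.1
      have hii' : (i : ℕ) < i' := hii
      exact h ⟨A.a f ℓ + i, by omega, by rw [hg i, heq]⟩
    have hinj : Function.Injective g := by
      intro i i' h
      rcases lt_trichotomy i i' with h' | h' | h'
      · exact absurd h (hlt _ _ h')
      · exact h'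
      · exact absurd h.symm (hlt _ _ h')
    have := Fintype.card_le_of_injective g hinj
    simp at this
    omega

lemma pg_weight_aux {n k d : ℕ} (hkd : k ≤ d)
    (A : ArrivalSeq n k d) (E : AlgExec A) (hE : E.PGValid)
    (f : Fin n) (hf : ¬ E.Completed f) (q : Fin n × Fin k)
    (hq : E.deliver (E.dropT f) = some q) : E.w f < E.w q.1 := by
  obtain ⟨h1, h2, h3⟩ := id hE
  have hne : {t : ℕ | ∃ ℓ : Fin k, E.dropTime (f, ℓ) = some t}.Nonempty := by
    by_contra hemp
    apply hf
    intro ℓ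
    obtain ⟨s, -, hs⟩ := pg_delivered_of_no_drop hkd E hE f (A.a f ℓ + d + 1)
      (by rintro j ⟨s, -, hs⟩
          exact hemp ⟨s, j, hs⟩) ℓ ℓ rfl (by omega)
    exact ⟨s, hs⟩
  obtain ⟨ℓ, hℓ⟩ : ∃ ℓ : Fin k, E.dropTime (f, ℓ) = some (E.dropT f) := Nat.sInf_mem hne
  have hmin : ∀ (j : Fin k) (s : ℕ), E.dropTime (f, j) = some s → E.dropT f ≤ s :=
    fun j s h => Nat.sInf_le ⟨j, h⟩
  generalize E.dropT f = t at *
  have hnd : ∀ j : Fin k, ¬ E.DroppedBefore (f, j) t := by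
    rintro j ⟨s, hs, hs'⟩
    exact absurd (hmin j s hs') (by omega)
  have halive : E.Alive f t := fun j =>
    ⟨hnd j, fun hj => pg_delivered_of_no_drop hkd E hE f t hnd j j rfl hj⟩
  obtain ⟨hpend, hor⟩ := (h3 _ _).mp hℓ
  have hqf : q.1 ≠ f := by
    rcases hor with h | ⟨q', hq', hne'⟩
    · exact absurd halive h
    · rw [hq] at hq'
      cases hq'
      exact hne'
  obtain ⟨qa, qp, qi, qmax⟩ := h1 t q.1 q.2 hq
  have hle := qmax f halive ⟨ℓ, hpend⟩
  rw [← qi] at hle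
  obtain ⟨hIk, hIp⟩ : ∃ h : E.Iidx t f < k, E.Pending (f, ⟨E.Iidx t f, h⟩) t :=
    Nat.sInf_mem (s := {ℓ : ℕ | ∃ h : ℓ < k, E.Pending (f, ⟨ℓ, h⟩) t}) ⟨ℓ, ℓ.2, hpend⟩
  generalize E.Iidx t f = I at *
  have hsub1 : {j : Fin k | E.Delivered (f, j)} ⊆ Set.Iio q.2 := by
    rintro j ⟨s, hs⟩
    obtain ⟨ja, jp, ji, -⟩ := h1 s f j hs
    have hst : s < t := by
      rcases lt_trichotomy s t with h | h | h
      · exact h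
      · subst h
        rw [hq] at hs
        cases hs
        exact absurd rfl hqf
      · exact absurd ⟨t, h, hℓ⟩ (ja ℓ).1
    have hjI : (j : ℕ) < I := by
      by_contra hcon
      have hIj : (⟨I, hIk⟩ : Fin k) ≤ j := not_lt.mp hcon
      have hmono := A.mono f hIj
      obtain ⟨p1, p2, p3, p4⟩ := hIp
      have hIs : E.Pending (f, ⟨I, hIk⟩) s := by
        refine ⟨hmono.trans jp.1, by omega, ?_, ?_⟩
        · rintro ⟨r, hr, hr'⟩
          exact p3 ⟨r, by omega, hr'⟩
        · rintro ⟨r, hr, hr'⟩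
          exact p4 ⟨r, by omega, hr'⟩
      have hjle : (j : ℕ) ≤ I := by
        rw [ji]
        exact Nat.sInf_le ⟨hIk, hIs⟩
      have hjeq : j = ⟨I, hIk⟩ := Fin.ext (by simp only; omega)
      exact p3 ⟨s, hst, by rw [← hjeq]; exact hs⟩
    exact Fin.lt_def.mpr (by omega)
  have hsub2 : Set.Iic q.2 ⊆ {j : Fin k | E.Delivered (q.1, j)} := by
    intro j hj
    rcases eq_or_lt_of_le (Set.mem_Iic.mp hj) with h | h
    · subst h
      exact ⟨t, hq⟩
    · by_contra hnot
      have hjp : E.Pending (q.1, j) t := by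
        refine ⟨(A.mono q.1 h.le).trans qp.1, ?_, ?_, (qa j).1⟩
        · by_contra hc
          obtain ⟨s, -, hs⟩ := (qa j).2 (not_le.mp hc)
          exact hnot ⟨s, hs⟩
        · rintro ⟨s, -, hs⟩
          exact hnot ⟨s, hs⟩
      have : E.Iidx t q.1 ≤ j := Nat.sInf_le ⟨j.2, hjp⟩
      have h' : (j : ℕ) < q.2 := h
      omega
  have hss : {j : Fin k | E.Delivered (f, j)} ⊂ {j : Fin k | E.Delivered (q.1, j)} :=
    (Set.ssubset_iff_of_subset (fun j hj => hsub2 (Set.mem_Iic.mpr (le_of_lt (Set.mem_Iio.mp (hsub1 hj)))))).mpr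
      ⟨q.2, hsub2 (Set.mem_Iic.mpr le_rfl), fun h => lt_irrefl q.2 (Set.mem_Iio.mp (hsub1 h))⟩
  exact Set.ncard_lt_ncard hss (Set.toFinite _)

end AlgExec

/-- In any execution of `ProactiveGreedy`, if a frame `f ∉ F_PG` is
directly mapped by the mapping `φ` to a frame `f'` (i.e. some packet `q` of `f'` is
delivered by `ProactiveGreedy` at the time `t_f` at which the first packet of `f` is
dropped), then `w f' > w f`, where `w g` denotes the number of packets of frame `g`
delivered by `ProactiveGreedy`. -/
theorem pg_mapping_weight_monotone (n k d : ℕ) (hkd : k ≤ d)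
    (A : ArrivalSeq n k d) (E : AlgExec A) (hE : E.PGValid) :
    ∀ f : Fin n, ¬ E.Completed f →
      ∀ q : Fin n × Fin k, E.deliver (E.dropT f) = some q →
        E.w f < E.w q.1 := by
  intro f hf q hq
  exact AlgExec.pg_weight_aux hkd A E hE f hf q hq
end

section
/- In any execution of algorithm ProactiveGreedy, every frame can be (re-)mapped by the mapping φ at most k times, and every frame is eventually mapped to a frame in F_PG; more precisely, if f_ℓ denotes the frame to which a frame f ∉ F_PG is mapped after its ℓ-th (re-)mapping, then w(f) + ℓ ≤ w(f_ℓ) for every ℓ, so after at most k remappings f is mapped to a frame f' with w(f') = k, i.e., f' ∈ F_PG. -/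
namespace AlgExec

variable {n k d : ℕ} {A : ArrivalSeq n k d}

/-- A frame none of whose packets was dropped before `t` is alive at `t`. -/
theorem pg_alive (hkd : k ≤ d) (E : AlgExec A) (hE : E.PGValid) (f : Fin n) (t : ℕ) :
    (∀ ℓ : Fin k, ¬ E.DroppedBefore (f, ℓ) t) → E.Alive f t := by
  obtain ⟨h1, h2, h3⟩ := hE
  induction t using Nat.strong_induction_on with
  | _ t ih =>
  intro hnd ℓ
  refine ⟨hnd ℓ, fun hlt => ?_⟩
  by_contra hdel
  have halive : ∀ s < t, E.Alive f s := fun s hs =>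
    ih s hs (fun ℓ' ⟨r, hr, hd⟩ => hnd ℓ' ⟨r, hr.trans hs, hd⟩)
  have hpend : ∀ i : Fin (d + 1), E.Pending (f, ℓ) (A.a f ℓ + i) := by
    intro i
    have hi := i.2
    refine ⟨by simp, by simp; omega, ?_, ?_⟩
    · rintro ⟨s, hs, hd⟩
      exact hdel ⟨s, by omega, hd⟩
    · rintro ⟨s, hs, hd⟩
      exact hnd ℓ ⟨s, by omega, hd⟩
  have hex : ∀ i : Fin (d + 1), ∃ m : Fin k, E.deliver (A.a f ℓ + i) = some (f, m) := by
    intro i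
    have hi := i.2
    have hne := h2 (A.a f ℓ + i) ⟨f, halive _ (by omega), ℓ, hpend i⟩
    obtain ⟨⟨g, m⟩, hq⟩ := Option.ne_none_iff_exists'.1 hne
    by_cases hg : g = f
    · exact ⟨m, by rw [hq, hg]⟩
    · exact absurd ⟨A.a f ℓ + i, by omega,
        (h3 (f, ℓ) _).2 ⟨hpend i, Or.inr ⟨(g, m), hq, hg⟩⟩⟩ (hnd ℓ)
  choose m hm using hex
  have key : ∀ i j : Fin (d + 1), i < j → m i ≠ m j := by
    intro i j hij he
    have hp := (h1 _ _ _ (hm j)).2.1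
    refine hp.2.2.1 ⟨A.a f ℓ + i, ?_, ?_⟩
    · have : (i : ℕ) < j := hij
      omega
    · rw [hm i, he]
  have hinj : Function.Injective m := by
    intro i j he
    rcases lt_trichotomy i j with h | h | h
    · exact absurd he (key i j h)
    · exact h
    · exact absurd he.symm (key j i h)
  have := Fintype.card_le_of_injective m hinj
  simp at this
  omega

theorem pg_drop (hkd : k ≤ d) (E : AlgExec A) (hE : E.PGValid) (f : Fin n)
    (hc : ¬ E.Completed f) :
    ∃ ℓ : Fin k, E.dropTime (f, ℓ) = some (E.dropT f) := by
  have hne : {t : ℕ | ∃ ℓ : Fin k, E.dropTime (f, ℓ) = some t}.Nonempty := by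
    by_contra h
    rw [Set.not_nonempty_iff_eq_empty] at h
    apply hc
    intro ℓ
    have hal := pg_alive hkd E hE f (A.a f ℓ + d + 1) (by
      rintro m ⟨s, _, hs⟩
      have : s ∈ {t : ℕ | ∃ ℓ : Fin k, E.dropTime (f, ℓ) = some t} := ⟨m, hs⟩
      rw [h] at this
      exact this)
    obtain ⟨s, _, hs⟩ := (hal ℓ).2 (by omega)
    exact ⟨s, hs⟩
  exact Nat.sInf_mem hne

theorem pg_step (hkd : k ≤ d) (E : AlgExec A) (hE : E.PGValid) (f : Fin n)
    (hc : ¬ E.Completed f) : E.w f + 1 ≤ E.w (E.phiNext f) := by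
  obtain ⟨ℓ, hℓ⟩ := pg_drop hkd E hE f hc
  have hal : E.Alive f (E.dropT f) := pg_alive hkd E hE f _ (by
    rintro m ⟨s, hs, hd⟩
    have : E.dropT f ≤ s := Nat.sInf_le ⟨m, hd⟩
    omega)
  obtain ⟨h1, h2, h3⟩ := hE
  obtain ⟨hp, hor⟩ := (h3 _ _).1 hℓ
  obtain ⟨⟨g, m⟩, hq, hgf⟩ := hor.resolve_left (fun h => h hal)
  have hnext : E.phiNext f = g := by
    simp [phiNext, hc, hq]
  rw [hnext]
  generalize E.dropT f = t at *
  obtain ⟨gal, gp, gi, gmax⟩ := h1 _ _ _ hq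
  have hle := gmax f hal ⟨ℓ, hp⟩
  -- the first pending packet of `f` at `t`
  have hmem : E.Iidx t f ∈ {i : ℕ | ∃ h : i < k, E.Pending (f, ⟨i, h⟩) t} :=
    Nat.sInf_mem ⟨ℓ, ℓ.2, hp⟩
  obtain ⟨hik, hip⟩ := hmem
  have hsub : {j : Fin k | E.Delivered (f, j)} ⊆ (Finset.Iio (⟨E.Iidx t f, hik⟩ : Fin k) : Finset (Fin k)) := by
    rintro j ⟨s, hs⟩
    simp only [Finset.coe_Iio, Set.mem_Iio]
    by_contra hji
    rw [not_lt] at hji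
    rcases lt_trichotomy s t with h | h | h
    · obtain ⟨-, sp, si, -⟩ := h1 _ _ _ hs
      have hpi : E.Pending (f, ⟨E.Iidx t f, hik⟩) s := by
        refine ⟨(A.mono f hji).trans sp.1, h.le.trans hip.2.1, ?_, ?_⟩
        · rintro ⟨r, hr, hd⟩
          exact hip.2.2.1 ⟨r, hr.trans h, hd⟩
        · rintro ⟨r, hr, hd⟩
          exact hip.2.2.2 ⟨r, hr.trans h, hd⟩
      have hle2 : E.Iidx s f ≤ E.Iidx t f := Nat.sInf_le ⟨hik, hpi⟩
      have heq : j = ⟨E.Iidx t f, hik⟩ := by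
        apply le_antisymm _ hji
        rw [Fin.le_def]
        simp only
        omega
      rw [heq] at hs
      exact hip.2.2.1 ⟨s, h, hs⟩
    · rw [h, hq] at hs
      simp only [Option.some.injEq, Prod.mk.injEq] at hs
      exact hgf hs.1
    · exact ((h1 _ _ _ hs).1 ℓ).1 ⟨t, h, hℓ⟩
  have hwf : E.w f ≤ E.Iidx t f := by
    have := Set.ncard_le_ncard hsub (Finset.finite_toSet _)
    rw [Set.ncard_coe_finset, Fin.card_Iio] at this
    exact this
  have hsup : ((Finset.Iic m : Finset (Fin k)) : Set (Fin k)) ⊆ {j : Fin k | E.Delivered (g, j)} := by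
    intro j hj
    simp only [Finset.coe_Iic, Set.mem_Iic] at hj
    rcases hj.lt_or_eq with hlt | rfl
    · have hnp : ¬ E.Pending (g, j) t := by
        intro hpj
        have : E.Iidx t g ≤ j := Nat.sInf_le ⟨j.2, hpj⟩
        have : (j : ℕ) < m := hlt
        omega
      have harr : A.a g j ≤ t := (A.mono g hj).trans gp.1
      by_contra hnd
      apply hnp
      refine ⟨harr, ?_, ?_, (gal j).1⟩
      · by_contra hx
        rw [not_le] at hx
        obtain ⟨s, _, hs⟩ := (gal j).2 hx
        exact hnd ⟨s, hs⟩
      · rintro ⟨s, _, hs⟩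
        exact hnd ⟨s, hs⟩
    · exact ⟨t, hq⟩
  have hwg : (m : ℕ) + 1 ≤ E.w g := by
    have := Set.ncard_le_ncard hsup (Set.toFinite _)
    rw [Set.ncard_coe_finset, Fin.card_Iic] at this
    exact this
  omega

end AlgExec

/-- In any execution of `ProactiveGreedy`, every frame is (re-)mapped
by `φ` at most `k` times and is eventually mapped to a frame of `F_PG`; more precisely,
whenever the frame `f_j` obtained from `f` after `j` (re-)mappings is itself remapped
(i.e. `f_j ∉ F_PG`), its successor satisfies `w f + (j + 1) ≤ w f_{j+1}`, so after at
most `k` remappings `f` is mapped to a frame `f'` with `w f' = k`, i.e. `f' ∈ F_PG`. -/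
theorem pg_remapping_length (n k d : ℕ) (hkd : k ≤ d)
    (A : ArrivalSeq n k d) (E : AlgExec A) (hE : E.PGValid) :
    (∀ f : Fin n, ∀ j : ℕ, ¬ E.Completed (E.phiChain f j) →
      E.w f + (j + 1) ≤ E.w (E.phiChain f (j + 1))) ∧
    ∀ f : Fin n, ∃ j ≤ k, E.Completed (E.phiChain f j) := by
  have hsucc : ∀ f j, E.phiChain f (j + 1) = E.phiNext (E.phiChain f j) := fun f j =>
    Function.iterate_succ_apply' _ _ _
  have main : ∀ f : Fin n, ∀ j : ℕ, ¬ E.Completed (E.phiChain f j) →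
      E.w f + (j + 1) ≤ E.w (E.phiChain f (j + 1)) := by
    intro f j
    induction j with
    | zero =>
      intro h
      exact AlgExec.pg_step hkd E hE f h
    | succ j ih =>
      intro h
      have hj : ¬ E.Completed (E.phiChain f j) := by
        intro hc
        apply h
        rw [hsucc, AlgExec.phiNext, if_pos hc]
        exact hc
      have := AlgExec.pg_step hkd E hE _ h
      rw [← hsucc] at this
      have := ih hj
      omega
  refine ⟨main, fun f => ⟨k, le_rfl, ?_⟩⟩
  by_contra h
  have h1 := main f k h
  have h2 : E.w (E.phiChain f (k + 1)) ≤ k := by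
    have := Set.ncard_le_ncard (Set.subset_univ {ℓ : Fin k | E.Delivered (E.phiChain f (k + 1), ℓ)})
    simpa [Set.ncard_univ, AlgExec.w] using this
  omega
end

section
/- In any execution of algorithm ProactiveGreedy on an arrival sequence with maximum burst size b, for every frame f and every packet p ∈ f, the number of frames directly mapped by the mapping φ to f via the packet p is at most b. -/
/-- pending one slot earlier -/
theorem AlgExec.Pending.pred {n k d : ℕ} {A : ArrivalSeq n k d} {E : AlgExec A}
    {p : Fin n × Fin k} {t s : ℕ} (h : E.Pending p t) (hs : s ≤ t)
    (ha : A.a p.1 p.2 ≤ s) : E.Pending p s := by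
  obtain ⟨_, h2, h3, h4⟩ := h
  refine ⟨ha, by omega, ?_, ?_⟩
  · rintro ⟨u, hu, hd⟩
    exact h3 ⟨u, by omega, hd⟩
  · rintro ⟨u, hu, hd⟩
    exact h4 ⟨u, by omega, hd⟩

/-- a pending packet not dropped at `s` belongs to the frame served at `s` -/
theorem AlgExec.PGValid.served {n k d : ℕ} {A : ArrivalSeq n k d} {E : AlgExec A}
    (hE : E.PGValid) {p : Fin n × Fin k} {s : ℕ} (h : E.Pending p s)
    (hd : E.dropTime p ≠ some s) : ∃ l, E.deliver s = some (p.1, l) := by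
  have h3 : ¬ (¬ E.Alive p.1 s ∨ ∃ q : Fin n × Fin k, E.deliver s = some q ∧ q.1 ≠ p.1) :=
    fun h' => hd ((hE.2.2 p s).2 ⟨h, h'⟩)
  push Not at h3
  obtain ⟨hal, hq⟩ := h3
  have hne := hE.2.1 s ⟨p.1, hal, p.2, h⟩
  obtain ⟨q, hq'⟩ := Option.ne_none_iff_exists'.1 hne
  refine ⟨q.2, ?_⟩
  rw [hq', ← hq q hq']

/-- a frame that is not completed has some packet dropped -/
theorem AlgExec.PGValid.exists_drop {n k d : ℕ} (hkd : k ≤ d) {A : ArrivalSeq n k d}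
    {E : AlgExec A} (hE : E.PGValid) {f : Fin n} (hf : ¬ E.Completed f) :
    ∃ t, ∃ l, E.dropTime (f, l) = some t := by
  by_contra hno
  push Not at hno
  unfold AlgExec.Completed at hf
  push Not at hf
  obtain ⟨l, hl⟩ := hf
  have hP : ∀ s : Fin (d + 1), E.Pending (f, l) (A.a f l + s) := by
    intro s
    refine ⟨by simp, by simp; omega, ?_, ?_⟩
    · rintro ⟨u, _, hu⟩
      exact hl ⟨u, hu⟩
    · rintro ⟨u, _, hu⟩
      exact hno u l hu
  have hS : ∀ s : Fin (d + 1), ∃ m, E.deliver (A.a f l + s) = some (f, m) :=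
    fun s => hE.served (hP s) (hno _ _)
  choose m hm using hS
  have hlt : ∀ s s' : Fin (d + 1), s < s' → m s ≠ m s' := by
    intro s s' hss he
    have h2 := (hE.1 _ _ _ (hm s')).2.1.2.2.1
    exact h2 ⟨A.a f l + s, by have : (s : ℕ) < s' := hss
                              omega, by rw [hm s, he]⟩
  have hinj : Function.Injective m := by
    intro s s' h
    rcases lt_trichotomy s s' with h' | h' | h'
    · exact absurd h (hlt _ _ h')
    · exact h'
    · exact absurd h.symm (hlt _ _ h')
  have := Fintype.card_le_of_injective m hinj
  simp at this
  omega

/-- In any execution of `ProactiveGreedy` on an arrival sequence with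
maximum burst size `b`, for every frame and every packet `q` of it, the number of
frames directly mapped by `φ` to that frame via the packet `q` is at most `b`. -/
theorem pg_direct_mapping_load (n k d b : ℕ) (hkd : k ≤ d)
    (A : ArrivalSeq n k d) (hburst : A.BurstBound b)
    (E : AlgExec A) (hE : E.PGValid) :
    ∀ q : Fin n × Fin k, Set.ncard {f : Fin n | E.PhiDirectVia f q} ≤ b := by
  intro q
  by_cases hex : ∃ t, E.deliver t = some q
  swap
  · have : {f : Fin n | E.PhiDirectVia f q} = ∅ := by
      ext f
      simp only [Set.mem_ofPred_eq, Set.mem_empty_iff_false, iff_false]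
      exact fun h => hex ⟨_, h.2⟩
    rw [this]
    simp
  obtain ⟨t, ht⟩ := hex
  obtain ⟨hqal, hqP, -, -⟩ := hE.1 t q.1 q.2 ht
  replace hqP : E.Pending q t := hqP
  have key : ∀ f, E.PhiDirectVia f q → f ≠ q.1 ∧ ∃ p : Fin n × Fin k, A.a p.1 p.2 = t ∧
      (p.1 = f ∨ (p = q ∧ ∃ l, E.deliver (t - 1) = some (f, l))) := by
    rintro f ⟨hc, hdel⟩
    have htd : E.dropT f = t := by
      have h1 := (hE.1 _ q.1 q.2 hdel).2.1.2.2.1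
      have h2 := hqP.2.2.1
      rcases lt_trichotomy (E.dropT f) t with h | h | h
      · exact absurd ⟨_, h, hdel⟩ h2
      · exact h
      · exact absurd ⟨_, h, ht⟩ h1
    have hmem : ∃ l, E.dropTime (f, l) = some (E.dropT f) :=
      Nat.sInf_mem (s := {t : ℕ | ∃ l : Fin k, E.dropTime (f, l) = some t})
        (hE.exists_drop hkd hc)
    rw [htd] at hmem
    obtain ⟨l, hl⟩ := hmem
    obtain ⟨hP, hor⟩ := (hE.2.2 _ _).1 hl
    have hne : f ≠ q.1 := by
      rintro rfl
      rcases hor with h | ⟨q', h, h'⟩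
      · exact h hqal
      · rw [ht] at h
        cases h
        exact h' rfl
    refine ⟨hne, ?_⟩
    by_cases ha : A.a f l = t
    · exact ⟨(f, l), ha, Or.inl rfl⟩
    have hle : A.a f l ≤ t := hP.1
    have hserv := hE.served (hP.pred (s := t - 1) (by omega) (by simp only; omega)) (by
      rw [hl]
      intro h
      injection h
      omega)
    obtain ⟨m, hm⟩ := hserv
    refine ⟨q, ?_, Or.inr ⟨rfl, m, hm⟩⟩
    by_contra hqa
    have hqle : A.a q.1 q.2 ≤ t := hqP.1
    have hd := (hE.2.2 q (t - 1)).2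
      ⟨hqP.pred (s := t - 1) (by omega) (by omega), Or.inr ⟨_, hm, hne⟩⟩
    exact hqP.2.2.2 ⟨t - 1, by omega, hd⟩
  refine le_trans ?_ (hburst t)
  haveI : Nonempty (Fin n × Fin k) := ⟨q⟩
  choose! hne r hr using key
  refine Set.ncard_le_ncard_of_injOn r (fun f hf => (hr f hf).1) ?_ (Set.toFinite _)
  intro f hf g hg hfg
  rcases (hr f hf).2 with h1 | ⟨h1, l, hl⟩ <;> rcases (hr g hg).2 with h2 | ⟨h2, m, hm⟩
  · rw [← h1, ← h2, hfg]
  · exact absurd (by rw [← h1, hfg, h2]) (hne f hf)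
  · exact absurd (by rw [← h2, ← hfg, h1]) (hne g hg)
  · rw [hl] at hm
    injection hm with h
    exact congrArg Prod.fst h
end

section
/- In any execution of algorithm Greedy on a d-uniform arrival sequence with maximum burst size b, for every time t and every index ℓ, if n is the total number of packets with index at least ℓ that became eligible and were subsequently dropped by Greedy by time t, then Greedy delivered at least ⌈n/b⌉ packets with index at least ℓ by time t. -/
namespace AlgExec

variable {n k d : ℕ} {A : ArrivalSeq n k d}

/-- slot `t` delivers a packet of index at least `ℓ`. -/
def BusySlot (E : AlgExec A) (ℓ t : ℕ) : Prop :=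
  ∃ q : Fin n × Fin k, E.deliver t = some q ∧ ℓ ≤ (q.2 : ℕ)

theorem busy_run (P : ℕ → Prop) (s : ℕ) (h : P s) :
    ∃ u ≤ s, (∀ r, u ≤ r → r ≤ s → P r) ∧ (u = 0 ∨ ¬ P (u - 1)) := by
  induction s with
  | zero => exact ⟨0, le_rfl, fun r _ h2 => by rwa [Nat.le_zero.mp h2], Or.inl rfl⟩
  | succ s ih =>
    by_cases hs : P s
    · obtain ⟨u, hu, h1, h2⟩ := ih hs
      refine ⟨u, by omega, fun r hr1 hr2 => ?_, h2⟩
      rcases Nat.lt_or_ge s r with h3 | h3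
      · have : r = s + 1 := by omega
        rwa [this]
      · exact h1 r hr1 h3
    · refine ⟨s + 1, le_rfl, fun r hr1 hr2 => ?_, Or.inr (by simpa using hs)⟩
      have : r = s + 1 := by omega
      rwa [this]

theorem Alive.anti {E : AlgExec A} {f : Fin n} {s t : ℕ} (h : E.Alive f t) (hst : s ≤ t) :
    E.Alive f s := by
  intro ℓ
  refine ⟨?_, fun h1 => (h ℓ).2 (by omega)⟩
  rintro ⟨r, hr, h2⟩
  exact (h ℓ).1 ⟨r, by omega, h2⟩

theorem Pending.anti {E : AlgExec A} {p : Fin n × Fin k} {s t : ℕ} (h : E.Pending p t)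
    (hst : s ≤ t) (ha : A.a p.1 p.2 ≤ s) : E.Pending p s := by
  obtain ⟨h1, h2, h3, h4⟩ := h
  refine ⟨ha, by omega, ?_, ?_⟩
  · rintro ⟨r, hr, h⟩
    exact h3 ⟨r, by omega, h⟩
  · rintro ⟨r, hr, h⟩
    exact h4 ⟨r, by omega, h⟩

theorem Iidx_le {E : AlgExec A} {f : Fin n} {ℓ : Fin k} {t : ℕ} (h : E.Pending (f, ℓ) t) :
    E.Iidx t f ≤ ℓ := Nat.sInf_le ⟨ℓ.2, h⟩

theorem Iidx_mem {E : AlgExec A} {f : Fin n} {t : ℕ} (h : E.HasPending f t) :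
    ∃ i : Fin k, E.Pending (f, i) t ∧ (i : ℕ) = E.Iidx t f := by
  obtain ⟨ℓ, h⟩ := h
  have hne : {ℓ : ℕ | ∃ h : ℓ < k, E.Pending (f, ⟨ℓ, h⟩) t}.Nonempty := ⟨ℓ, ℓ.2, h⟩
  obtain ⟨h1, h2⟩ := Nat.sInf_mem hne
  exact ⟨⟨_, h1⟩, h2, rfl⟩

theorem infeasible_of_expire {E : AlgExec A} {f : Fin n} {j : Fin k} {t : ℕ}
    (h : E.PendingAfter (f, j) t) (he : A.a f j + d = t) : E.Infeasible f t := by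
  refine ⟨j, h, ?_⟩
  have : 0 < Set.ncard {i : Fin k | i ≤ j ∧ E.PendingAfter (f, i) t} :=
    (Set.ncard_pos (Set.toFinite _)).2 ⟨j, le_rfl, h⟩
  omega

/-- A packet that is eligible and later dropped is still eligible at its drop time. -/
theorem eligible_at_drop {E : AlgExec A} (hE : E.GreedyValid) {p : Fin n × Fin k} {s s' : ℕ}
    (hs : s ≤ s') (hel : E.Eligible p s) (hd : E.dropTime p = some s') : E.Eligible p s' := by
  obtain ⟨f, i⟩ := p
  obtain ⟨hal, hpe, hI⟩ := hel
  simp only at hal hI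
  have hpe' := ((hE.2.2 _ _).1 hd).1
  have key : ∀ r, s ≤ r → r < s' → E.Alive f r ∧ ¬ E.Infeasible f r := by
    intro r h1 h2
    by_contra hcon
    have hp : E.Pending (f, i) r := hpe'.anti h2.le (hpe.1.trans h1)
    have hnd : E.deliver r ≠ some (f, i) := fun h => hpe'.2.2.1 ⟨r, h2, h⟩
    have : E.dropTime (f, i) = some r := by
      refine (hE.2.2 _ _).2 ⟨hp, hnd, ?_⟩
      by_cases ha : E.Alive f r
      · right; right
        by_contra h3
        exact hcon ⟨ha, h3⟩
      · exact Or.inl ha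
    rw [hd] at this
    have := Option.some.inj this
    omega
  refine ⟨fun j => ⟨?_, ?_⟩, hpe', ?_⟩
  · rintro ⟨r, hr, hdr⟩
    rcases Nat.lt_or_ge r s with h | h
    · exact (hal j).1 ⟨r, h, hdr⟩
    · obtain ⟨ha, hi⟩ := key r h hr
      obtain ⟨h1, h2, h3⟩ := (hE.2.2 _ _).1 hdr
      rcases h3 with h3 | h3 | h3
      · exact h3 ha
      · exact hi (infeasible_of_expire ⟨h1, h2⟩ h3)
      · exact hi h3
  · intro hx
    rcases Nat.lt_or_ge (A.a f j + d) s with h | h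
    · exact (hal j).2 h
    · obtain ⟨ha, hi⟩ := key _ h hx
      by_contra hnd
      refine hi (infeasible_of_expire (j := j) ⟨⟨by simp, by simp, ?_, (ha j).1⟩, ?_⟩ rfl)
      · rintro ⟨r, hr, h⟩
        exact hnd ⟨r, hr.le, h⟩
      · exact fun h => hnd ⟨_, le_rfl, h⟩
  · apply le_antisymm _ (Iidx_le hpe')
    obtain ⟨i', hp', hi'⟩ := Iidx_mem (E := E) ⟨i, hpe'⟩
    change (i : ℕ) ≤ E.Iidx s' f
    rw [← hi']
    by_contra hlt
    have hlt : i' < i := by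
      rw [Fin.lt_def]; simpa using hlt
    have hp : E.Pending (f, i') s := hp'.anti hs ((A.mono f hlt.le).trans hpe.1)
    have := Iidx_le hp
    rw [Fin.lt_def] at hlt
    omega

/-- If an eligible packet of index at least `ℓ` exists, the slot is busy. -/
theorem busy_of_eligible {E : AlgExec A} (hE : E.GreedyValid) {p : Fin n × Fin k} {ℓ s : ℕ}
    (hℓ : ℓ ≤ (p.2 : ℕ)) (hel : E.Eligible p s) : E.BusySlot ℓ s := by
  obtain ⟨hal, hpe, hI⟩ := hel
  have hne := hE.2.1 s ⟨p.1, hal, p.2, hpe⟩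
  obtain ⟨⟨g, i⟩, hq⟩ := Option.ne_none_iff_exists'.1 hne
  obtain ⟨-, -, h3, h4⟩ := hE.1 _ _ _ hq
  have := h4 p.1 hal ⟨p.2, hpe⟩
  refine ⟨_, hq, ?_⟩
  simp only
  omega

/-- The charging argument for a single dropped packet. -/
theorem charge {E : AlgExec A} (hkd : k ≤ d) (hE : E.GreedyValid) {p : Fin n × Fin k}
    {ℓ s' : ℕ} (hℓ : ℓ ≤ (p.2 : ℕ)) (hel : E.Eligible p s') (hd : E.dropTime p = some s') :
    ∃ y ≤ s', E.BusySlot ℓ y ∧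
      ((∃ x j, y = x + 1 ∧ E.BusySlot ℓ x ∧ A.a p.1 j = x) ∨
        (∃ x j, y = x + 1 ∧ ¬ E.BusySlot ℓ x ∧ E.deliver x = some (p.1, j))) := by
  have hb := busy_of_eligible hE hℓ hel
  obtain ⟨f, i⟩ := p
  obtain ⟨hal, hpe, hI⟩ := hel
  simp only at hal hI hℓ
  obtain ⟨-, hnd, hor⟩ := (hE.2.2 _ _).1 hd
  have hinf : E.Infeasible f s' := by
    rcases hor with h | h | h
    · exact absurd hal h
    · exact infeasible_of_expire ⟨hpe, hnd⟩ h
    · exact h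
  obtain ⟨j, hj, hlt⟩ := hinf
  have hcard : Set.ncard {x : Fin k | x ≤ j ∧ E.PendingAfter (f, x) s'} ≤ k := by
    simpa using Set.ncard_le_card {x : Fin k | x ≤ j ∧ E.PendingAfter (f, x) s'}
  have hx : A.a f j < s' := by omega
  obtain ⟨u, hu, hrun, hst⟩ := busy_run (E.BusySlot ℓ) s' hb
  rcases Nat.lt_or_ge (A.a f j) u with hxu | hxu
  · obtain ⟨v, rfl⟩ : ∃ v, u = v + 1 := ⟨u - 1, by omega⟩
    have hnb : ¬ E.BusySlot ℓ v := by simpa using hst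
    refine ⟨v + 1, hu, hrun _ le_rfl hu, Or.inr ?_⟩
    have hjv : E.Pending (f, j) v := hj.1.anti (by omega) (by simp only; omega)
    have halv : E.Alive f v := hal.anti (by omega)
    obtain ⟨i', hp', hi'⟩ := Iidx_mem (E := E) ⟨j, hjv⟩
    have hi'ℓ : (i' : ℕ) < ℓ := by
      by_contra h
      exact hnb (busy_of_eligible hE (p := (f, i')) (by simpa using h) ⟨halv, hp', hi'⟩)
    have hnp : ¬ E.Pending (f, i') s' := by
      intro h
      have := Iidx_le h
      omega
    have hdel : ∃ r < s', E.deliver r = some (f, i') := by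
      by_contra hno
      refine hnp ⟨hp'.1.trans (by omega), ?_, hno, (hal i').1⟩
      by_contra hexp
      obtain ⟨r, hr, h⟩ := (hal i').2 (by simpa using hexp)
      simp only [not_le] at hexp
      exact hno ⟨r, by omega, h⟩
    obtain ⟨r, hr, h⟩ := hdel
    have h1 : v ≤ r := by
      by_contra hc
      exact hp'.2.2.1 ⟨r, by omega, h⟩
    have h2 : r = v := by
      by_contra hc
      obtain ⟨q, hq, hq2⟩ := hrun r (by omega) hr.le
      rw [h] at hq
      have := Option.some.inj hq
      subst this
      simp only at hq2
      omega
    subst h2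
    exact ⟨r, i', rfl, hnb, h⟩
  · exact ⟨A.a f j + 1, hx, hrun _ (by omega) hx,
      Or.inl ⟨_, j, rfl, hrun _ hxu hx.le, rfl⟩⟩

/-- Every frame contributes at most one packet that is eligible at its drop time. -/
theorem drop_unique {E : AlgExec A} {p p' : Fin n × Fin k} {s s' : ℕ}
    (hel : E.Eligible p s) (hd : E.dropTime p = some s)
    (hel' : E.Eligible p' s') (hd' : E.dropTime p' = some s') (hf : p.1 = p'.1) : p = p' := by
  obtain ⟨f, i⟩ := p
  obtain ⟨f', i'⟩ := p'
  simp only at hf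
  subst hf
  have hss : s = s' := by
    rcases lt_trichotomy s s' with h | h | h
    · exact absurd ⟨s, h, hd⟩ (hel'.1 i).1
    · exact h
    · exact absurd ⟨s', h, hd'⟩ (hel.1 i').1
  subst hss
  have h1 := hel.2.2
  have h2 := hel'.2.2
  simp only at h1 h2
  have : i = i' := Fin.ext (h1.trans h2.symm)
  rw [this]

theorem deliver_inj {E : AlgExec A} (hE : E.GreedyValid) {p : Fin n × Fin k} {s s' : ℕ}
    (h : E.deliver s = some p) (h' : E.deliver s' = some p) : s = s' := by
  rcases lt_trichotomy s s' with hs | hs | hs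
  · exact absurd ⟨s, hs, h⟩ (hE.1 s' p.1 p.2 h').2.1.2.2.1
  · exact hs
  · exact absurd ⟨s', hs, h'⟩ (hE.1 s p.1 p.2 h).2.1.2.2.1

end AlgExec

/-- In any execution of `Greedy` on a `d`-uniform arrival sequence
with maximum burst size `b`, for every time `t` and every index `ℓ`: if `m` is the
total number of packets with index at least `ℓ` that became eligible and were
subsequently dropped by `Greedy` by time `t`, then `Greedy` delivered at least
`⌈m / b⌉` packets with index at least `ℓ` by time `t`. -/
theorem greedy_eligible_drop_vs_delivered (n k d b : ℕ) (hkd : k ≤ d)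
    (A : ArrivalSeq n k d) (hburst : A.BurstBound b)
    (E : AlgExec A) (hE : E.GreedyValid) :
    ∀ t ℓ : ℕ,
      (Set.ncard {p : Fin n × Fin k | ℓ ≤ (p.2 : ℕ) ∧
          ∃ s' ≤ t, E.dropTime p = some s' ∧ ∃ s ≤ s', E.Eligible p s} + b - 1) / b
        ≤ Set.ncard {p : Fin n × Fin k | ℓ ≤ (p.2 : ℕ) ∧ ∃ s ≤ t, E.deliver s = some p} := by
  classical
  intro t ℓ
  set D : Set (Fin n × Fin k) := {p | ℓ ≤ (p.2 : ℕ) ∧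
          ∃ s' ≤ t, E.dropTime p = some s' ∧ ∃ s ≤ s', E.Eligible p s} with hD
  set G : Set (Fin n × Fin k) := {p | ℓ ≤ (p.2 : ℕ) ∧ ∃ s ≤ t, E.deliver s = some p} with hG
  rcases Nat.eq_zero_or_pos b with hb | hb
  · subst hb; simp
  have hDel : ∀ p ∈ D, ∃ s', s' ≤ t ∧ E.Eligible p s' ∧ E.dropTime p = some s' := by
    rintro p ⟨-, s', hs', hd, s, hs, hel⟩
    exact ⟨s', hs', AlgExec.eligible_at_drop hE hs hel hd, hd⟩
  have huniq : ∀ p ∈ D, ∀ p' ∈ D, p.1 = p'.1 → p = p' := by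
    intro p hp p' hp' hf
    obtain ⟨s, -, h1, h2⟩ := hDel p hp
    obtain ⟨s', -, h3, h4⟩ := hDel p' hp'
    exact AlgExec.drop_unique h1 h2 h3 h4 hf
  have hch : ∀ p : Fin n × Fin k, ∃ y, p ∈ D → y ≤ t ∧ E.BusySlot ℓ y ∧
      ((∃ x j, y = x + 1 ∧ E.BusySlot ℓ x ∧ A.a p.1 j = x) ∨
        (∃ x j, y = x + 1 ∧ ¬ E.BusySlot ℓ x ∧ E.deliver x = some (p.1, j))) := by
    intro p
    by_cases hp : p ∈ D
    · obtain ⟨s, hs, h1, h2⟩ := hDel p hp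
      obtain ⟨y, hy, h3⟩ := AlgExec.charge hkd hE hp.1 h1 h2
      exact ⟨y, fun _ => ⟨hy.trans hs, h3⟩⟩
    · exact ⟨0, fun h => absurd h hp⟩
  choose c hc using hch
  let T : Finset ℕ := (Finset.range (t + 1)).filter (E.BusySlot ℓ)
  have hfib : ∀ y ∈ T, (D.toFinset.filter (fun p => c p = y)).card ≤ b := by
    intro y _
    by_cases hy : ∃ x, y = x + 1 ∧ E.BusySlot ℓ x
    · obtain ⟨x, rfl, hx⟩ := hy
      have hw : ∀ p : Fin n × Fin k, ∃ j : Fin k, p ∈ D → c p = x + 1 → A.a p.1 j = x := by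
        intro p
        by_cases hp : p ∈ D ∧ c p = x + 1
        · obtain ⟨-, -, h | h⟩ := hc p hp.1
          · obtain ⟨x', j, h1, h2, h3⟩ := h
            exact ⟨j, fun _ _ => by omega⟩
          · obtain ⟨x', j, h1, h2, h3⟩ := h
            have : x' = x := by omega
            subst this
            exact absurd hx h2
        · exact ⟨p.2, fun h1 h2 => absurd ⟨h1, h2⟩ hp⟩
      choose w hw using hw
      have hB := hburst x
      rw [Set.ncard_eq_toFinset_card'] at hB
      refine le_trans (Finset.card_le_card_of_injOn (fun p => (p.1, w p)) ?_ ?_) hB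
      · intro p hp
        simp only [Finset.coe_filter, Set.mem_toFinset, Set.mem_ofPred_eq] at hp
        simpa using hw p hp.1 hp.2
      · intro p hp p' hp' heq
        simp only [Finset.coe_filter, Set.mem_toFinset, Set.mem_ofPred_eq] at hp hp'
        exact huniq p hp.1 p' hp'.1 (Prod.mk.inj heq).1
    · refine le_trans (Finset.card_le_one.2 ?_) hb
      have hw : ∀ p ∈ D, c p = y → ∃ x j, y = x + 1 ∧ E.deliver x = some (p.1, j) := by
        intro p hp hcp
        obtain ⟨-, -, h | h⟩ := hc p hp
        · obtain ⟨x', j, h1, h2, h3⟩ := h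
          exact absurd ⟨x', by omega, h2⟩ hy
        · obtain ⟨x', j, h1, h2, h3⟩ := h
          exact ⟨x', j, by omega, h3⟩
      intro p hp p' hp'
      simp only [Finset.mem_filter, Set.mem_toFinset] at hp hp'
      obtain ⟨x, j, h1, h2⟩ := hw p hp.1 hp.2
      obtain ⟨x', j', h1', h2'⟩ := hw p' hp'.1 hp'.2
      have : x = x' := by omega
      subst this
      rw [h2] at h2'
      exact huniq p hp.1 p' hp'.1 (Prod.mk.inj (Option.some.inj h2')).1
  have hmaps : ∀ p ∈ D.toFinset, c p ∈ T := by
    intro p hp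
    have h := hc p (Set.mem_toFinset.1 hp)
    simp only [T, Finset.mem_filter, Finset.mem_range]
    exact ⟨by omega, h.2.1⟩
  have h1 : D.toFinset.card ≤ b * T.card :=
    Finset.card_le_mul_card_image_of_maps_to hmaps b hfib
  have h2 : T.card ≤ G.toFinset.card := by
    have hq : ∀ y : ℕ, y ∈ T → ∃ q : Fin n × Fin k, E.deliver y = some q ∧ ℓ ≤ (q.2 : ℕ) := by
      intro y hy
      exact (Finset.mem_filter.1 hy).2
    rcases Finset.eq_empty_or_nonempty T with hT | ⟨y0, hy0⟩
    · simp [hT]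
    obtain ⟨q0, -⟩ := hq y0 hy0
    haveI : Nonempty (Fin n × Fin k) := ⟨q0⟩
    choose! q hq using hq
    refine Finset.card_le_card_of_injOn (fun y => q y) ?_ ?_
    · intro y hy
      have hy' := Finset.mem_range.1 (Finset.mem_filter.1 hy).1
      simp only [Set.coe_toFinset]
      exact ⟨(hq y hy).2, y, by omega, (hq y hy).1⟩
    · intro y hy y' hy' heq
      simp only at heq
      have h := (hq y hy).1
      rw [heq] at h
      exact AlgExec.deliver_inj hE h (hq y' hy').1
  rw [Set.ncard_eq_toFinset_card', Set.ncard_eq_toFinset_card']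
  have h3 : D.toFinset.card ≤ b * G.toFinset.card := h1.trans (Nat.mul_le_mul_left b h2)
  rw [← Nat.lt_succ_iff, Nat.div_lt_iff_lt_mul hb, Nat.succ_mul, Nat.mul_comm]
  omega
end
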